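/- arXiv:nlin/0604063 — 4 statements merged into one kernel-verified Lean document; each statement's English description precedes it below -/
import Mathlib

section
/- Let ν, b, μ, A, k ∈ ℂ with ν ≠ 0 and k ≠ 0, let ξ₀ ∈ ℂ, let n ≥ 1 be an integer and c₀, …, c_n ∈ ℂ with c_n ≠ 0. Suppose the function u(ξ) = Σ_{j=0}^{n} c_j · ((k/2)·tanh(k(ξ−ξ₀)/2))^j solves the KS ODE on the open set {ξ ∈ ℂ : cosh(k(ξ−ξ₀)/2) ≠ 0}. Then n = 3, c₃ = 120ν, c₂ = −15b, c₁ = 60μ/19 − 30νk² − 15b²/(76ν), c₀ = (5/2)b k² − 13b³/(608ν²) + 7μb/(76ν), and the parameters satisfy one of the following six cases: (i) b = 0, νA = −4950μ³/19³, νk² = 11μ/19; (ii) b = 0, νA = 450μ³/19³, νk² = −μ/19; (iii) b² = 144μν/47, νA = −1800μ³/47³, νk² = μ/47; (iv) b² = 256μν/73, νA = −4050μ³/73³, νk² = μ/73; (v) b² = 16μν, νA = −18μ³, νk² = μ; (vi) b² = 16μν, νA = −8μ³, νk² = −μ. -/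
open Complex

/-!
Since `τ = (k / 2) tanh (k (ξ - ξ₀) / 2)` satisfies `τ' = k² / 4 - τ²`, differentiating `p(τ)`
amounts to applying the derivation `D : p ↦ p' * (k² / 4 - X²)` to `p`, and because `τ` takes
infinitely many values the ODE becomes an identity in the polynomial ring. In degree `n ≥ 1` the
derivation raises the degree by exactly one, so balancing `D³ p` (degree `n + 3`) against `p²`
(degree `2 * n`) forces `n = 3`. The identity is then a sextic with seven vanishing coefficients:
the top four determine `c₃, c₂, c₁, c₀` in turn and, after clearing denominators, the bottom three
are homogeneous equations in `b²`, `μν`, `ν²k²` and `ν⁴A`. Two of them do not involve `A` and have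
six lines of common zeros in characteristic zero; the third then gives `A`.
-/

open Polynomial

section Coefficients

variable {R : Type*} [Semiring R]

theorem exists_natDegree_eq_and_eval_eq_sum {n : ℕ} {c : ℕ → R} (hcn : c n ≠ 0) :
    ∃ p : R[X], p.natDegree = n ∧ (∀ j ≤ n, p.coeff j = c j) ∧
      ∀ x, p.eval x = ∑ j ∈ Finset.range (n + 1), c j * x ^ j := by
  let p := ∑ j ∈ Finset.range (n + 1), C (c j) * X ^ j
  have hcoeff (j : ℕ) (hj : j ≤ n) : p.coeff j = c j := by
    simp [p, finsetSum_coeff, coeff_X_pow, Nat.lt_succ_of_le hj]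
  refine ⟨p, ?_, hcoeff, fun x => by simp [p, eval_finsetSum]⟩
  refine natDegree_eq_of_le_of_coeff_ne_zero (natDegree_sum_le_of_forall_le _ _ fun j hj => ?_)
    ((hcoeff n le_rfl).trans_ne hcn)
  exact (natDegree_C_mul_X_pow_le _ _).trans (Finset.mem_range_succ_iff.mp hj)

theorem coeffs_eq_zero_of_sextic_eq_zero {a₆ a₅ a₄ a₃ a₂ a₁ a₀ : R}
    (h : C a₆ * X ^ 6 + C a₅ * X ^ 5 + C a₄ * X ^ 4 + C a₃ * X ^ 3 + C a₂ * X ^ 2 + C a₁ * X +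
      C a₀ = 0) :
    a₆ = 0 ∧ a₅ = 0 ∧ a₄ = 0 ∧ a₃ = 0 ∧ a₂ = 0 ∧ a₁ = 0 ∧ a₀ = 0 := by
  have hcoeff (j : ℕ) := congrArg (coeff · j) h
  simp only [coeff_add, coeff_C_mul, coeff_X_pow, coeff_X, coeff_C, coeff_zero] at hcoeff
  exact ⟨by simpa using hcoeff 6, by simpa using hcoeff 5, by simpa using hcoeff 4,
    by simpa using hcoeff 3, by simpa using hcoeff 2, by simpa using hcoeff 1,
    by simpa using hcoeff 0⟩

end Coefficients

section RiccatiDerivation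

variable {R : Type*} [CommRing R]

/-- The derivation of `R[X]` with `X ↦ r - X²`: it acts on `p` as differentiation acts on `p(τ)`
when `τ` solves the Riccati equation `τ' = r - τ²`. -/
noncomputable def riccatiDerivation (r : R) : Derivation R R[X] R[X] :=
  mkDerivation R (C r - X ^ 2)

theorem riccatiDerivation_apply (r : R) (p : R[X]) :
    riccatiDerivation r p = derivative p * (C r - X ^ 2) := by
  rw [riccatiDerivation, mkDerivation_apply, smul_eq_mul]

variable [IsDomain R] [CharZero R]

theorem natDegree_riccatiDerivation (r : R) {p : R[X]} (hp : p.natDegree ≠ 0) :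
    (riccatiDerivation r p).natDegree = p.natDegree + 1 := by
  have hr : (C r - X ^ 2).natDegree = 2 := by
    rw [← natDegree_neg, neg_sub, natDegree_X_pow_sub_C]
  have hr₀ : C r - X ^ 2 ≠ 0 := ne_zero_of_natDegree_gt (n := 0) (by omega)
  rw [riccatiDerivation_apply, natDegree_mul (derivative_eq_zero.not.mpr hp) hr₀,
    natDegree_derivative, hr]
  omega

theorem natDegree_iterate_riccatiDerivation (r : R) {p : R[X]} (hp : p.natDegree ≠ 0) (i : ℕ) :
    ((riccatiDerivation r)^[i] p).natDegree = p.natDegree + i := by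
  induction i with
  | zero => rfl
  | succ i ih =>
    rw [Function.iterate_succ_apply', natDegree_riccatiDerivation r (by omega), ih, add_assoc]

end RiccatiDerivation

section KSPolynomial

variable {F : Type*} [Field F]

/-- The left-hand side of the KS ODE at `p(τ)`, as a polynomial in a solution `τ` of
`τ' = r - τ²`. -/
noncomputable def ksPolynomial (ν b μ A r : F) (p : F[X]) : F[X] :=
  C ν * (riccatiDerivation r)^[3] p + C b * (riccatiDerivation r)^[2] p +
    C μ * riccatiDerivation r p + C (1 / 2) * p ^ 2 + C A

/-- The six families of parameters of the KS ODE that admit a solution polynomial in a solution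
of `τ' = κ / 4 - τ²`; for `τ = (k / 2) tanh (k (ξ - ξ₀) / 2)` one has `κ = k²`. -/
def IsKSParameters (ν b μ A κ : F) : Prop :=
  (b = 0 ∧ ν * A = -4950 * μ ^ 3 / 19 ^ 3 ∧ ν * κ = 11 * μ / 19) ∨
  (b = 0 ∧ ν * A = 450 * μ ^ 3 / 19 ^ 3 ∧ ν * κ = -μ / 19) ∨
  (b ^ 2 = 144 * μ * ν / 47 ∧ ν * A = -1800 * μ ^ 3 / 47 ^ 3 ∧ ν * κ = μ / 47) ∨
  (b ^ 2 = 256 * μ * ν / 73 ∧ ν * A = -4050 * μ ^ 3 / 73 ^ 3 ∧ ν * κ = μ / 73) ∨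
  (b ^ 2 = 16 * μ * ν ∧ ν * A = -18 * μ ^ 3 ∧ ν * κ = μ) ∨
  (b ^ 2 = 16 * μ * ν ∧ ν * A = -8 * μ ^ 3 ∧ ν * κ = -μ)

variable [CharZero F]

theorem natDegree_eq_three_of_ksPolynomial_eq_zero {ν b μ A r : F} (hν : ν ≠ 0) {p : F[X]}
    (hp : p.natDegree ≠ 0) (h : ksPolynomial ν b μ A r p = 0) : p.natDegree = 3 := by
  have hD := natDegree_iterate_riccatiDerivation r hp
  let third := C ν * (riccatiDerivation r)^[3] p
  let lower := C b * (riccatiDerivation r)^[2] p + C μ * riccatiDerivation r p + C A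
  let square := C (1 / 2) * p ^ 2
  have hthird : third.natDegree = p.natDegree + 3 := by rw [natDegree_C_mul hν, hD]
  have hlower : lower.natDegree ≤ p.natDegree + 2 := by
    have h₂ : (C b * (riccatiDerivation r)^[2] p).natDegree ≤ p.natDegree + 2 :=
      (natDegree_C_mul_le _ _).trans (hD 2).le
    have h₁ : (C μ * riccatiDerivation r p).natDegree ≤ p.natDegree + 2 :=
      (natDegree_C_mul_le _ _).trans ((hD 1).le.trans (by omega))
    exact natDegree_add_le_of_degree_le (natDegree_add_le_of_degree_le h₂ h₁)
      ((natDegree_C A).le.trans (Nat.zero_le _))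
  have hsquare : square.natDegree = 2 * p.natDegree := by
    rw [natDegree_C_mul (by norm_num), natDegree_pow]
  have hbalance : third + lower + square = 0 := by
    rw [← h, ksPolynomial]
    ring
  have hsquare_le : square.natDegree ≤ max third.natDegree lower.natDegree := by
    rw [eq_neg_of_add_eq_zero_right hbalance, natDegree_neg]
    exact natDegree_add_le _ _
  have hthird_le : third.natDegree ≤ max lower.natDegree square.natDegree := by
    rw [eq_neg_of_add_eq_zero_left ((add_assoc _ _ _).symm.trans hbalance), natDegree_neg]
    exact natDegree_add_le _ _
  omega

theorem ksPolynomial_cubic (ν b μ A r c₃ c₂ c₁ c₀ : F) :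
    ksPolynomial ν b μ A r (Cubic.toPoly ⟨c₃, c₂, c₁, c₀⟩) =
      C (-60 * ν * c₃ + c₃ ^ 2 / 2) * X ^ 6 +
      C (-24 * ν * c₂ + 12 * b * c₃ + c₂ * c₃) * X ^ 5 +
      C (114 * r * ν * c₃ - 6 * ν * c₁ + 6 * b * c₂ - 3 * μ * c₃ + c₁ * c₃ + c₂ ^ 2 / 2) * X ^ 4 +
      C (40 * r * ν * c₂ + b * (2 * c₁ - 18 * r * c₃) - 2 * μ * c₂ + c₀ * c₃ + c₁ * c₂) * X ^ 3 +
      C (ν * (8 * r * c₁ - 60 * r ^ 2 * c₃) - 8 * b * r * c₂ + μ * (3 * r * c₃ - c₁) + c₀ * c₂ +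
        c₁ ^ 2 / 2) * X ^ 2 +
      C (-16 * ν * r ^ 2 * c₂ + b * (6 * r ^ 2 * c₃ - 2 * r * c₁) + 2 * μ * r * c₂ + c₀ * c₁) * X +
      C (ν * (6 * r ^ 3 * c₃ - 2 * r ^ 2 * c₁) + 2 * b * r ^ 2 * c₂ + μ * r * c₁ + c₀ ^ 2 / 2 +
        A) := by
  refine Polynomial.funext fun x => ?_
  simp only [ksPolynomial, Cubic.toPoly, Function.iterate_succ, Function.iterate_zero,
    Function.comp_apply, id_eq, riccatiDerivation_apply, derivative_add, derivative_sub,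
    derivative_mul, derivative_X_pow, derivative_X, derivative_C, derivative_one, derivative_zero,
    eval_add, eval_sub, eval_mul, eval_pow, eval_X, eval_C, eval_one, eval_zero]
  ring

theorem cubic_coeffs_of_ksPolynomial_eq_zero {ν b μ A κ c₃ c₂ c₁ c₀ : F} (hν : ν ≠ 0)
    (hc₃ : c₃ ≠ 0) (h : ksPolynomial ν b μ A (κ / 4) (Cubic.toPoly ⟨c₃, c₂, c₁, c₀⟩) = 0) :
    c₃ = 120 * ν ∧ c₂ = -15 * b ∧
      c₁ = 60 * μ / 19 - 30 * ν * κ - 15 * b ^ 2 / (76 * ν) ∧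
      c₀ = 5 / 2 * b * κ - 13 * b ^ 3 / (608 * ν ^ 2) + 7 * μ * b / (76 * ν) := by
  rw [ksPolynomial_cubic] at h
  obtain ⟨e₆, e₅, e₄, e₃, -⟩ := coeffs_eq_zero_of_sextic_eq_zero h
  obtain rfl : c₃ = 120 * ν := mul_left_cancel₀ hc₃ (by linear_combination 2 * e₆)
  obtain rfl : c₂ = -15 * b := mul_left_cancel₀ hν (by linear_combination e₅ / 96)
  obtain rfl : c₁ = 60 * μ / 19 - 30 * ν * κ - 15 * b ^ 2 / (76 * ν) := by
    field_simp
    linear_combination 38 / 3 * e₄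
  refine ⟨rfl, rfl, rfl, ?_⟩
  field_simp at e₃ ⊢
  linear_combination 2 / 15 * e₃

theorem ks_compatibility_cases {s t r : F}
    (h₁ : s * ((16 * t - s) * (56 * t - 13 * s - 760 * r)) = 0)
    (h₂ : 131 * s ^ 2 - 696 * s * t + 704 * t ^ 2 + (12160 * t - 760 * s) * r - 23104 * r ^ 2 = 0) :
    (s = 0 ∧ r = 11 * t / 19) ∨ (s = 0 ∧ r = -t / 19) ∨ (s = 144 * t / 47 ∧ r = t / 47) ∨
      (s = 256 * t / 73 ∧ r = t / 73) ∨ (s = 16 * t ∧ r = t) ∨ (s = 16 * t ∧ r = -t) := by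
  rcases mul_eq_zero.mp h₁ with rfl | h₁
  · have h : (r - 11 * t / 19) * (r - -t / 19) = 0 := by linear_combination -h₂ / 23104
    rcases mul_eq_zero.mp h with h | h
    · exact .inl ⟨rfl, sub_eq_zero.mp h⟩
    · exact .inr <| .inl ⟨rfl, sub_eq_zero.mp h⟩
  rcases mul_eq_zero.mp h₁ with h₁ | h₁
  · obtain rfl : s = 16 * t := (sub_eq_zero.mp h₁).symm
    have h : (r - t) * (r - -t) = 0 := by linear_combination -h₂ / 23104
    rcases mul_eq_zero.mp h with h | h
    · exact .inr <| .inr <| .inr <| .inr <| .inl ⟨rfl, sub_eq_zero.mp h⟩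
    · exact .inr <| .inr <| .inr <| .inr <| .inr ⟨rfl, sub_eq_zero.mp h⟩
  · obtain rfl : r = (56 * t - 13 * s) / 760 := by linear_combination -h₁ / 760
    have h : (s - 144 * t / 47) * (s - 256 * t / 73) = 0 := by linear_combination 25 / 3431 * h₂
    rcases mul_eq_zero.mp h with h | h
    · obtain rfl := sub_eq_zero.mp h
      exact .inr <| .inr <| .inl ⟨rfl, by ring⟩
    · obtain rfl := sub_eq_zero.mp h
      exact .inr <| .inr <| .inr <| .inl ⟨rfl, by ring⟩

theorem ks_compatibility_equations {ν b μ A κ : F} (hν : ν ≠ 0)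
    (h : ksPolynomial ν b μ A (κ / 4) (Cubic.toPoly ⟨120 * ν, -15 * b,
      60 * μ / 19 - 30 * ν * κ - 15 * b ^ 2 / (76 * ν),
      5 / 2 * b * κ - 13 * b ^ 3 / (608 * ν ^ 2) + 7 * μ * b / (76 * ν)⟩) = 0) :
    b ^ 2 * ((16 * (μ * ν) - b ^ 2) * (56 * (μ * ν) - 13 * b ^ 2 - 760 * (ν ^ 2 * κ))) = 0 ∧
    131 * (b ^ 2) ^ 2 - 696 * b ^ 2 * (μ * ν) + 704 * (μ * ν) ^ 2 +
      (12160 * (μ * ν) - 760 * b ^ 2) * (ν ^ 2 * κ) - 23104 * (ν ^ 2 * κ) ^ 2 = 0 ∧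
    ν ^ 3 * (ν * A) = -(15 * (ν ^ 2 * κ) ^ 3 - 150 / 19 * (μ * ν) * (ν ^ 2 * κ) ^ 2 +
      775 / 608 * b ^ 2 * (ν ^ 2 * κ) ^ 2 + 15 / 19 * (μ * ν) ^ 2 * (ν ^ 2 * κ) +
      55 / 304 * b ^ 2 * (μ * ν) * (ν ^ 2 * κ) - 65 / 1216 * (b ^ 2) ^ 2 * (ν ^ 2 * κ) +
      169 / 739328 * (b ^ 2) ^ 3 - 91 / 46208 * (b ^ 2) ^ 2 * (μ * ν) +
      49 / 11552 * b ^ 2 * (μ * ν) ^ 2) := by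
  rw [ksPolynomial_cubic] at h
  obtain ⟨-, -, -, -, e₂, e₁, e₀⟩ := coeffs_eq_zero_of_sextic_eq_zero h
  refine ⟨?_, ?_, ?_⟩
  · linear_combination (norm := skip) 46208 / 15 * ν ^ 3 * b * e₁
    field_simp
    ring
  · linear_combination (norm := skip) 5776 / 15 * ν ^ 2 * e₂
    field_simp
    ring
  · linear_combination (norm := skip) ν ^ 4 * e₀
    field_simp
    ring

theorem isKSParameters_of_ksPolynomial_eq_zero {ν b μ A κ : F} (hν : ν ≠ 0)
    (h : ksPolynomial ν b μ A (κ / 4) (Cubic.toPoly ⟨120 * ν, -15 * b,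
      60 * μ / 19 - 30 * ν * κ - 15 * b ^ 2 / (76 * ν),
      5 / 2 * b * κ - 13 * b ^ 3 / (608 * ν ^ 2) + 7 * μ * b / (76 * ν)⟩) = 0) :
    IsKSParameters ν b μ A κ := by
  obtain ⟨h₁, h₂, h₀⟩ := ks_compatibility_equations hν h
  have cancel_κ {x : F} (hx : ν ^ 2 * κ = ν * x) : ν * κ = x :=
    mul_left_cancel₀ hν (by rw [← hx]; ring)
  have cancel_A {x : F} (hx : ν ^ 3 * (ν * A) = ν ^ 3 * x) : ν * A = x :=
    mul_left_cancel₀ (pow_ne_zero 3 hν) hx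
  rcases ks_compatibility_cases h₁ h₂ with
    ⟨hb, hκ⟩ | ⟨hb, hκ⟩ | ⟨hb, hκ⟩ | ⟨hb, hκ⟩ | ⟨hb, hκ⟩ | ⟨hb, hκ⟩ <;> rw [hb, hκ] at h₀
  · exact .inl ⟨sq_eq_zero_iff.mp hb, cancel_A (h₀.trans (by ring)), cancel_κ (hκ.trans (by ring))⟩
  · exact .inr <| .inl
      ⟨sq_eq_zero_iff.mp hb, cancel_A (h₀.trans (by ring)), cancel_κ (hκ.trans (by ring))⟩
  · exact .inr <| .inr <| .inl
      ⟨hb.trans (by ring), cancel_A (h₀.trans (by ring)), cancel_κ (hκ.trans (by ring))⟩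
  · exact .inr <| .inr <| .inr <| .inl
      ⟨hb.trans (by ring), cancel_A (h₀.trans (by ring)), cancel_κ (hκ.trans (by ring))⟩
  · exact .inr <| .inr <| .inr <| .inr <| .inl
      ⟨hb.trans (by ring), cancel_A (h₀.trans (by ring)), cancel_κ (hκ.trans (by ring))⟩
  · exact .inr <| .inr <| .inr <| .inr <| .inr
      ⟨hb.trans (by ring), cancel_A (h₀.trans (by ring)), cancel_κ (hκ.trans (by ring))⟩

theorem ksPolynomial_eq_zero_classification {ν b μ A κ : F} (hν : ν ≠ 0) {p : F[X]}
    (hp : p.natDegree ≠ 0) (h : ksPolynomial ν b μ A (κ / 4) p = 0) :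
    p.natDegree = 3 ∧ p.coeff 3 = 120 * ν ∧ p.coeff 2 = -15 * b ∧
      p.coeff 1 = 60 * μ / 19 - 30 * ν * κ - 15 * b ^ 2 / (76 * ν) ∧
      p.coeff 0 = 5 / 2 * b * κ - 13 * b ^ 3 / (608 * ν ^ 2) + 7 * μ * b / (76 * ν) ∧
      IsKSParameters ν b μ A κ := by
  have hdeg := natDegree_eq_three_of_ksPolynomial_eq_zero hν hp h
  have hc₃ : p.coeff 3 ≠ 0 := by
    rw [← hdeg, coeff_natDegree, leadingCoeff_ne_zero]
    exact ne_zero_of_natDegree_gt (Nat.pos_of_ne_zero hp)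
  have hcubic : Cubic.toPoly ⟨p.coeff 3, p.coeff 2, p.coeff 1, p.coeff 0⟩ = p :=
    congrArg Subtype.val (Cubic.equiv.apply_symm_apply ⟨p, natDegree_le_iff_degree_le.mp hdeg.le⟩)
  rw [← hcubic] at h
  obtain ⟨h₃, h₂, h₁, h₀⟩ := cubic_coeffs_of_ksPolynomial_eq_zero hν hc₃ h
  rw [h₃, h₂, h₁, h₀] at h
  exact ⟨hdeg, h₃, h₂, h₁, h₀, isKSParameters_of_ksPolynomial_eq_zero hν h⟩

end KSPolynomial

section RiccatiSolution

variable {𝕜 : Type*} [NontriviallyNormedField 𝕜]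

theorem hasDerivAt_eval_riccati {τ : 𝕜 → 𝕜} {r ξ : 𝕜} (hτ : HasDerivAt τ (r - τ ξ ^ 2) ξ)
    (p : 𝕜[X]) :
    HasDerivAt (fun ζ => p.eval (τ ζ)) ((riccatiDerivation r p).eval (τ ξ)) ξ := by
  refine ((p.hasDerivAt (τ ξ)).comp ξ hτ).congr_deriv ?_
  simp only [riccatiDerivation_apply, eval_mul, eval_sub, eval_C, eval_pow, eval_X]

variable {τ u : 𝕜 → 𝕜} {r : 𝕜} {U : Set 𝕜}

theorem iterate_deriv_eqOn_eval_riccati (hU : IsOpen U)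
    (hτ : ∀ ξ ∈ U, HasDerivAt τ (r - τ ξ ^ 2) ξ) {p : 𝕜[X]} (hu : U.EqOn u fun ξ => p.eval (τ ξ))
    (i : ℕ) : U.EqOn (deriv^[i] u) fun ξ => ((riccatiDerivation r)^[i] p).eval (τ ξ) := by
  induction i with
  | zero => exact hu
  | succ i ih =>
    intro ξ hξ
    simp only [Function.iterate_succ_apply']
    rw [(ih.eventuallyEq_of_mem (hU.mem_nhds hξ)).deriv_eq]
    exact (hasDerivAt_eval_riccati (hτ ξ hξ) _).deriv

theorem ksPolynomial_eq_zero_of_solution (hU : IsOpen U)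
    (hτ : ∀ ξ ∈ U, HasDerivAt τ (r - τ ξ ^ 2) ξ) (hinf : (τ '' U).Infinite)
    {p : 𝕜[X]} (hu : U.EqOn u fun ξ => p.eval (τ ξ)) {ν b μ A : 𝕜}
    (hode : ∀ ξ ∈ U,
      ν * deriv^[3] u ξ + b * deriv^[2] u ξ + μ * deriv u ξ + (u ξ) ^ 2 / 2 + A = 0) :
    ksPolynomial ν b μ A r p = 0 := by
  have hderiv := iterate_deriv_eqOn_eval_riccati hU hτ hu
  refine eq_zero_of_infinite_isRoot _ (hinf.mono ?_)
  rintro _ ⟨ξ, hξ, rfl⟩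
  have hderiv₁ : deriv u ξ = (riccatiDerivation r p).eval (τ ξ) := hderiv 1 hξ
  rw [Set.mem_ofPred_eq, IsRoot, ← hode ξ hξ, hderiv 3 hξ, hderiv 2 hξ, hderiv₁, hu hξ]
  simp only [ksPolynomial, eval_add, eval_mul, eval_pow, eval_C]
  ring

theorem ks_tanh_polynomial_classification_general [CharZero 𝕜] {ν b μ A κ : 𝕜} (hν : ν ≠ 0)
    {n : ℕ} (hn : 1 ≤ n) {c : ℕ → 𝕜} (hcn : c n ≠ 0) (hU : IsOpen U)
    (hτ : ∀ ξ ∈ U, HasDerivAt τ (κ / 4 - τ ξ ^ 2) ξ) (hinf : (τ '' U).Infinite)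
    (hu : ∀ ξ ∈ U, u ξ = ∑ j ∈ Finset.range (n + 1), c j * (τ ξ) ^ j)
    (hode : ∀ ξ ∈ U,
      ν * deriv^[3] u ξ + b * deriv^[2] u ξ + μ * deriv u ξ + (u ξ) ^ 2 / 2 + A = 0) :
    n = 3 ∧ c 3 = 120 * ν ∧ c 2 = -15 * b ∧
      c 1 = 60 * μ / 19 - 30 * ν * κ - 15 * b ^ 2 / (76 * ν) ∧
      c 0 = 5 / 2 * b * κ - 13 * b ^ 3 / (608 * ν ^ 2) + 7 * μ * b / (76 * ν) ∧
      IsKSParameters ν b μ A κ := by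
  obtain ⟨p, rfl, hcoeff, heval⟩ := exists_natDegree_eq_and_eval_eq_sum hcn
  have hp := ksPolynomial_eq_zero_of_solution hU hτ hinf
    (fun ξ hξ => (hu ξ hξ).trans (heval _).symm) hode
  have h := ksPolynomial_eq_zero_classification hν (Nat.one_le_iff_ne_zero.mp hn) hp
  have hdeg := h.1
  simpa only [hcoeff _ hdeg.ge, hcoeff 2 (by omega), hcoeff 1 (by omega), hcoeff 0 (by omega)]
    using h

end RiccatiSolution

section Tanh

/-- The function `τ` of the theorem, for wave number `k` and centre `ξ₀`. -/
noncomputable def tanhProfile (k ξ₀ ξ : ℂ) : ℂ := k / 2 * tanh (k * (ξ - ξ₀) / 2)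

theorem isOpen_cosh_ne_zero (k ξ₀ : ℂ) : IsOpen {ξ : ℂ | cosh (k * (ξ - ξ₀) / 2) ≠ 0} :=
  isOpen_ne_fun (by fun_prop) continuous_const

theorem hasDerivAt_tanhProfile {k ξ₀ ξ : ℂ} (hξ : cosh (k * (ξ - ξ₀) / 2) ≠ 0) :
    HasDerivAt (tanhProfile k ξ₀) (k ^ 2 / 4 - tanhProfile k ξ₀ ξ ^ 2) ξ := by
  have hphase : HasDerivAt (fun ζ : ℂ => k * (ζ - ξ₀) / 2) (k / 2) ξ := by
    simpa using (((hasDerivAt_id ξ).sub_const ξ₀).const_mul k).div_const 2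
  have hquot := (hphase.csinh.fun_div hphase.ccosh hξ).const_mul (k / 2)
  simp only [← tanh_eq_sinh_div_cosh] at hquot
  refine hquot.congr_deriv ?_
  rw [tanhProfile, tanh_eq_sinh_div_cosh]
  field_simp
  ring

theorem infinite_image_tanhProfile {k : ℂ} (hk : k ≠ 0) (ξ₀ : ℂ) :
    (tanhProfile k ξ₀ '' {ξ | cosh (k * (ξ - ξ₀) / 2) ≠ 0}).Infinite := by
  have hinj : Function.Injective fun x : ℝ => k / 2 * (Real.tanh x : ℂ) :=
    (mul_right_injective₀ (div_ne_zero hk two_ne_zero)).comp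
      (ofReal_injective.comp Real.tanh_injective)
  refine (Set.infinite_range_of_injective hinj).mono ?_
  rintro _ ⟨x, rfl⟩
  have hphase : k * (ξ₀ + 2 * x / k - ξ₀) / 2 = x := by
    field_simp
    ring
  refine ⟨ξ₀ + 2 * x / k, ?_, ?_⟩
  · rw [Set.mem_ofPred_eq, hphase, ← ofReal_cosh]
    exact ofReal_ne_zero.mpr (Real.cosh_pos x).ne'
  · simp only [tanhProfile, hphase, ofReal_tanh]

end Tanh

/-- classification of the tanh-polynomial solutions of the KS ODE:
a polynomial in `τ(ξ) = (k/2) tanh(k(ξ-ξ₀)/2)` solving the KS ODE must have degree `3`,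
the coefficients are forced, and the parameters must satisfy one of six cases. -/
theorem ks_tanh_polynomial_classification
    (ν b μ A k ξ₀ : ℂ) (hν : ν ≠ 0) (hk : k ≠ 0)
    (n : ℕ) (hn : 1 ≤ n) (c : ℕ → ℂ) (hcn : c n ≠ 0)
    (τ u : ℂ → ℂ)
    (hτ : ∀ ξ : ℂ, τ ξ = k / 2 * Complex.tanh (k * (ξ - ξ₀) / 2))
    (hu : ∀ ξ : ℂ, u ξ = ∑ j ∈ Finset.range (n + 1), c j * (τ ξ) ^ j)
    (hode : ∀ ξ : ℂ, Complex.cosh (k * (ξ - ξ₀) / 2) ≠ 0 →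
      ν * deriv^[3] u ξ + b * deriv^[2] u ξ + μ * deriv u ξ + (u ξ) ^ 2 / 2 + A = 0) :
    n = 3 ∧ c 3 = 120 * ν ∧ c 2 = -15 * b ∧
      c 1 = 60 * μ / 19 - 30 * ν * k ^ 2 - 15 * b ^ 2 / (76 * ν) ∧
      c 0 = 5 / 2 * b * k ^ 2 - 13 * b ^ 3 / (608 * ν ^ 2) + 7 * μ * b / (76 * ν) ∧
      ((b = 0 ∧ ν * A = -4950 * μ ^ 3 / 19 ^ 3 ∧ ν * k ^ 2 = 11 * μ / 19) ∨
       (b = 0 ∧ ν * A = 450 * μ ^ 3 / 19 ^ 3 ∧ ν * k ^ 2 = -μ / 19) ∨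
       (b ^ 2 = 144 * μ * ν / 47 ∧ ν * A = -1800 * μ ^ 3 / 47 ^ 3 ∧ ν * k ^ 2 = μ / 47) ∨
       (b ^ 2 = 256 * μ * ν / 73 ∧ ν * A = -4050 * μ ^ 3 / 73 ^ 3 ∧ ν * k ^ 2 = μ / 73) ∨
       (b ^ 2 = 16 * μ * ν ∧ ν * A = -18 * μ ^ 3 ∧ ν * k ^ 2 = μ) ∨
       (b ^ 2 = 16 * μ * ν ∧ ν * A = -8 * μ ^ 3 ∧ ν * k ^ 2 = -μ)) := by
  obtain rfl : τ = tanhProfile k ξ₀ := funext hτ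
  exact ks_tanh_polynomial_classification_general hν hn hcn (isOpen_cosh_ne_zero k ξ₀)
    (fun _ => hasDerivAt_tanhProfile) (infinite_image_tanhProfile hk ξ₀) (fun ξ _ => hu ξ) hode
end

section
/- Let ν, b, μ, A ∈ ℂ with ν ≠ 0 and b² = 16μν. Set g₂ = μ²/(12ν²) and g₃ = (13μ³ + νA)/(1080ν³). Let U ⊆ ℂ be open and let w be analytic on U satisfying (w')² = 4w³ − g₂w − g₃ and w'' = 6w² − g₂/2 on U, and put u = −60ν w' − 15b w − bμ/(4ν) and u_s = u + 3b³/(32ν²). Then u satisfies the first-order equation (u' + (b/(2ν)) u_s)² · (u' − (b/(4ν)) u_s) + (9/(40ν)) · (u_s² + 15b⁶/(1024ν⁴) + 10A/3)² = 0 identically on U. -/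
/-!
Put `a = b / (4ν)` and `e = μ / (12ν)`. The condition `b² = 16μν` becomes `a² = 12e`, and
`g₂ = 12e²`, so that `w'' = 6(w - e)(w + e)`. Moreover `u_s = -60ν q` with `q = w' + a(w - e)`,
and the three expressions which make up the subequation factor through `s = w - e` and
`r = 2(w - e)(w + 5e) + a w'`:
`q' - a q = 6s²`, `q' + 2a q = 3r`, `q² + g₃ + 8e³ = 2sr`.
Hence `(q' + 2a q)² (q' - a q) = 54 r² s² = (27/2) (q² + g₃ + 8e³)²`, which is the subequation
up to the scaling `u_s = -60ν q`.
-/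

namespace KuramotoSivashinsky

section NormalizedSubequation

variable {R : Type*} [CommRing R] {a e g₃ x p : R}

theorem normalized_sub_mul_eq_sq (ha : a ^ 2 = 12 * e) :
    6 * (x ^ 2 - e ^ 2) + a * p - a * (p + a * (x - e)) = 6 * (x - e) ^ 2 := by
  linear_combination (e - x) * ha

theorem normalized_add_two_mul_eq_mul (ha : a ^ 2 = 12 * e) :
    6 * (x ^ 2 - e ^ 2) + a * p + 2 * a * (p + a * (x - e)) =
      3 * (2 * (x - e) * (x + 5 * e) + a * p) := by
  linear_combination 2 * (x - e) * ha

theorem normalized_sq_add_eq_mul (ha : a ^ 2 = 12 * e)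
    (hp : p ^ 2 = 4 * x ^ 3 - 12 * e ^ 2 * x - g₃) :
    (p + a * (x - e)) ^ 2 + (g₃ + 8 * e ^ 3) =
      2 * (x - e) * (2 * (x - e) * (x + 5 * e) + a * p) := by
  linear_combination (x - e) ^ 2 * ha + hp

theorem normalized_subequation {q q' : R} (ha : a ^ 2 = 12 * e)
    (hp : p ^ 2 = 4 * x ^ 3 - 12 * e ^ 2 * x - g₃)
    (hq : q = p + a * (x - e)) (hq' : q' = 6 * (x ^ 2 - e ^ 2) + a * p) :
    2 * ((q' + 2 * a * q) ^ 2 * (q' - a * q)) = 27 * (q ^ 2 + (g₃ + 8 * e ^ 3)) ^ 2 := by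
  rw [hq, hq', normalized_add_two_mul_eq_mul ha, normalized_sub_mul_eq_sq ha,
    normalized_sq_add_eq_mul ha hp]
  ring

end NormalizedSubequation

section Normalization

variable {K : Type*} [Field K] [CharZero K] {ν b μ : K}

theorem normalized_coeff_sq (hν : ν ≠ 0) (hb : b ^ 2 = 16 * μ * ν) :
    (b / (4 * ν)) ^ 2 = 12 * (μ / (12 * ν)) := by
  rw [div_pow, hb]
  field_simp
  ring

theorem elliptic_solution_add_shift_eq (hν : ν ≠ 0) (hb : b ^ 2 = 16 * μ * ν) (x p : K) :
    -60 * ν * p - 15 * b * x - b * μ / (4 * ν) + 3 * b ^ 3 / (32 * ν ^ 2) =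
      -60 * ν * (p + b / (4 * ν) * (x - μ / (12 * ν))) := by
  rw [show b ^ 3 = b * (16 * μ * ν) by rw [← hb]; ring]
  field_simp
  ring

theorem subequation_const_eq {A g₃ : K} (hν : ν ≠ 0) (hb : b ^ 2 = 16 * μ * ν)
    (hg₃ : g₃ = (13 * μ ^ 3 + ν * A) / (1080 * ν ^ 3)) :
    15 * b ^ 6 / (1024 * ν ^ 4) + 10 * A / 3 =
      3600 * ν ^ 2 * (g₃ + 8 * (μ / (12 * ν)) ^ 3) := by
  rw [show b ^ 6 = (16 * μ * ν) ^ 3 by rw [← hb]; ring, hg₃]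
  field_simp
  ring

theorem subequation_scaling (hν : ν ≠ 0) (a q q' k : K) :
    (-60 * ν * q' + 2 * a * (-60 * ν * q)) ^ 2 * (-60 * ν * q' - a * (-60 * ν * q))
        + 9 / (40 * ν) * ((-60 * ν * q) ^ 2 + 3600 * ν ^ 2 * k) ^ 2 =
      108000 * ν ^ 3 * (27 * (q ^ 2 + k) ^ 2 - 2 * ((q' + 2 * a * q) ^ 2 * (q' - a * q))) := by
  field_simp
  ring

end Normalization

theorem hasDerivAt_elliptic_solution {𝕜 : Type*} [NontriviallyNormedField 𝕜] [CharZero 𝕜]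
    {ν b μ z w'' : 𝕜} {w w' : 𝕜 → 𝕜} (hν : ν ≠ 0)
    (hw : HasDerivAt w (w' z) z) (hw' : HasDerivAt w' w'' z) :
    HasDerivAt (fun t ↦ -60 * ν * w' t - 15 * b * w t - b * μ / (4 * ν))
      (-60 * ν * (w'' + b / (4 * ν) * w' z)) z := by
  refine (((hw'.const_mul (-60 * ν)).sub (hw.const_mul (15 * b))).sub_const _).congr_deriv ?_
  field_simp
  ring

end KuramotoSivashinsky

open KuramotoSivashinsky in
theorem ks_elliptic_first_order_subequation_general
    {𝕜 : Type*} [NontriviallyNormedField 𝕜] [CharZero 𝕜]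
    {ν b μ A g₂ g₃ z us : 𝕜} {w w' u : 𝕜 → 𝕜} (hν : ν ≠ 0) (hb : b ^ 2 = 16 * μ * ν)
    (hg₂ : g₂ = μ ^ 2 / (12 * ν ^ 2))
    (hg₃ : g₃ = (13 * μ ^ 3 + ν * A) / (1080 * ν ^ 3))
    (hw : HasDerivAt w (w' z) z) (hw' : HasDerivAt w' (6 * w z ^ 2 - g₂ / 2) z)
    (hweq : w' z ^ 2 = 4 * w z ^ 3 - g₂ * w z - g₃)
    (hu : ∀ t, u t = -60 * ν * w' t - 15 * b * w t - b * μ / (4 * ν))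
    (hus : us = u z + 3 * b ^ 3 / (32 * ν ^ 2)) :
    (deriv u z + b / (2 * ν) * us) ^ 2 * (deriv u z - b / (4 * ν) * us)
      + 9 / (40 * ν) * (us ^ 2 + 15 * b ^ 6 / (1024 * ν ^ 4) + 10 * A / 3) ^ 2 = 0 := by
  have hg₂e : g₂ = 12 * (μ / (12 * ν)) ^ 2 := by rw [hg₂]; field_simp
  have hus_eq := hus.trans <| hu z ▸ elliptic_solution_add_shift_eq hν hb (w z) (w' z)
  have hu' : deriv u z =
      -60 * ν * (6 * (w z ^ 2 - (μ / (12 * ν)) ^ 2) + b / (4 * ν) * w' z) := by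
    rw [funext hu, (hasDerivAt_elliptic_solution hν hw hw').deriv, hg₂e]
    ring
  have hb_half : b / (2 * ν) = 2 * (b / (4 * ν)) := by
    field_simp
    norm_num
  have hsub := normalized_subequation (normalized_coeff_sq hν hb) (hg₂e ▸ hweq) rfl rfl
  rw [add_assoc (us ^ 2), subequation_const_eq hν hb hg₃, hus_eq, hu', hb_half,
    subequation_scaling hν, hsub, sub_self, mul_zero]

/-- the elliptic solution `u = -60ν w' - 15b w - bμ/(4ν)` of the KS ODE
(case `b² = 16μν`) satisfies the first-order autonomous subequation
`(u' + (b/2ν) u_s)² (u' - (b/4ν) u_s) + (9/40ν)(u_s² + 15b⁶/1024ν⁴ + 10A/3)² = 0`,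
where `u_s = u + 3b³/(32ν²)`. -/
theorem ks_elliptic_first_order_subequation
    (ν b μ A : ℂ) (hν : ν ≠ 0) (hb : b ^ 2 = 16 * μ * ν)
    (g₂ g₃ : ℂ) (hg₂ : g₂ = μ ^ 2 / (12 * ν ^ 2))
    (hg₃ : g₃ = (13 * μ ^ 3 + ν * A) / (1080 * ν ^ 3))
    (U : Set ℂ) (hU : IsOpen U)
    (w : ℂ → ℂ) (hw : AnalyticOnNhd ℂ w U)
    (hweq : ∀ z ∈ U, (deriv w z) ^ 2 = 4 * (w z) ^ 3 - g₂ * w z - g₃)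
    (hweq2 : ∀ z ∈ U, deriv^[2] w z = 6 * (w z) ^ 2 - g₂ / 2)
    (u us : ℂ → ℂ)
    (hu : ∀ z : ℂ, u z = -60 * ν * deriv w z - 15 * b * w z - b * μ / (4 * ν))
    (hus : ∀ z : ℂ, us z = u z + 3 * b ^ 3 / (32 * ν ^ 2)) :
    ∀ z ∈ U,
      (deriv u z + b / (2 * ν) * us z) ^ 2 * (deriv u z - b / (4 * ν) * us z)
        + 9 / (40 * ν) *
          ((us z) ^ 2 + 15 * b ^ 6 / (1024 * ν ^ 4) + 10 * A / 3) ^ 2 = 0 := fun z hz ↦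
  ks_elliptic_first_order_subequation_general hν hb hg₂ hg₃ (hw z hz).differentiableAt.hasDerivAt
    (hweq2 z hz ▸ (hw z hz).deriv.differentiableAt.hasDerivAt) (hweq z hz) hu (hus z)
end

section
/- Let ν, b, μ ∈ ℂ with ν ≠ 0 and μ ≠ 0, suppose b² = 144μν/47, let k, ξ₀ ∈ ℂ with k² = μ/(47ν), set A = −1800 μ³/(47³ ν), and let u(ξ) = 120ν τ(ξ)³ − 15b τ(ξ)² + (60μ/19 − 30νk² − 15b²/(76ν)) τ(ξ) + (5/2)b k² − 13b³/(608ν²) + 7μb/(76ν), where τ(ξ) = (k/2)·tanh(k(ξ−ξ₀)/2), on U = {ξ ∈ ℂ : cosh(k(ξ−ξ₀)/2) ≠ 0}. Put u_s = u − 5b³/(144ν²). Then u satisfies the first-order equation (u' + (b/(4ν)) u_s)³ + (9/(40ν)) u_s⁴ = 0 identically on U. -/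
open Complex

/-!
Put `m = b / (24 ν)`. The constraints on `b` and `k` give `m ^ 2 = (k / 2) ^ 2`, so the Riccati
equation `τ' = (k / 2) ^ 2 - τ ^ 2` has the constant solution `m`, and `T = τ - m` satisfies the
Bernoulli equation `T' = -2 m T - T ^ 2`. The same constraints turn `u_s` into the perfect cube
`120 ν T ^ 3`, whence `u_s' + 6 m u_s = -360 ν T ^ 4`. The cube of the right-hand side and the
fourth power of `u_s` are both multiples of `T ^ 12`, so `T` can be eliminated.
-/

section Bernoulli

variable {𝕜 : Type*} [NontriviallyNormedField 𝕜] {T : 𝕜 → 𝕜} {p q x : 𝕜}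

theorem hasDerivAt_const_mul_pow_of_bernoulli (hT : HasDerivAt T (p * T x + q * T x ^ 2) x)
    (a : 𝕜) (n : ℕ) :
    HasDerivAt (fun y ↦ a * T y ^ n) (n * p * (a * T x ^ n) + n * q * a * T x ^ (n + 1)) x := by
  refine ((hT.fun_pow n).const_mul a).congr_deriv ?_
  cases n with
  | zero => simp
  | succ n => simp only [Nat.add_sub_cancel]; ring

theorem first_order_subequation_of_bernoulli (hT : HasDerivAt T (p * T x + q * T x ^ 2) x)
    (a : 𝕜) (n : ℕ) :
    a * (deriv (fun y ↦ a * T y ^ n) x - n * p * (a * T x ^ n)) ^ n =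
      (n * q) ^ n * (a * T x ^ n) ^ (n + 1) := by
  rw [(hasDerivAt_const_mul_pow_of_bernoulli hT a n).deriv, add_sub_cancel_left]
  ring

end Bernoulli

theorem hasDerivAt_complex_tanh {z : ℂ} (hz : Complex.cosh z ≠ 0) :
    HasDerivAt Complex.tanh (1 - Complex.tanh z ^ 2) z := by
  have hquot := (Complex.hasDerivAt_sinh z).fun_div (Complex.hasDerivAt_cosh z) hz
  simp only [← Complex.tanh_eq_sinh_div_cosh] at hquot
  refine hquot.congr_deriv ?_
  rw [Complex.tanh_eq_sinh_div_cosh]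
  field_simp

theorem hasDerivAt_const_mul_tanh_riccati {κ ξ₀ ξ : ℂ}
    (hcosh : Complex.cosh (κ * (ξ - ξ₀)) ≠ 0) :
    HasDerivAt (fun x ↦ κ * Complex.tanh (κ * (x - ξ₀)))
      (κ ^ 2 - (κ * Complex.tanh (κ * (ξ - ξ₀))) ^ 2) ξ := by
  have hphase : HasDerivAt (fun x ↦ κ * (x - ξ₀)) κ ξ := by
    simpa using ((hasDerivAt_id ξ).sub_const ξ₀).const_mul κ
  refine (((hasDerivAt_complex_tanh hcosh).comp ξ hphase).const_mul κ).congr_deriv ?_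
  ring

section Parameters

variable {F : Type*} [Field F] [CharZero F] {ν b μ k : F}

theorem sq_div_eq_sq_half_of_ks_trig_case3 (hν : ν ≠ 0) (hb : b ^ 2 = 144 * μ * ν / 47)
    (hk : k ^ 2 = μ / (47 * ν)) : (b / (24 * ν)) ^ 2 = (k / 2) ^ 2 := by
  rw [div_pow, div_pow, hb, hk]
  field_simp
  ring

theorem ks_trig_case3_sub_const_eq_cube (hν : ν ≠ 0) (hb : b ^ 2 = 144 * μ * ν / 47)
    (hk : k ^ 2 = μ / (47 * ν)) (t : F) :
    120 * ν * t ^ 3 - 15 * b * t ^ 2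
        + (60 * μ / 19 - 30 * ν * k ^ 2 - 15 * b ^ 2 / (76 * ν)) * t
        + 5 / 2 * b * k ^ 2 - 13 * b ^ 3 / (608 * ν ^ 2) + 7 * μ * b / (76 * ν)
        - 5 * b ^ 3 / (144 * ν ^ 2) =
      120 * ν * (t - b / (24 * ν)) ^ 3 := by
  have hμ : μ = 47 * b ^ 2 / (144 * ν) := by rw [hb]; field_simp
  have hk' : k ^ 2 = b ^ 2 / (144 * ν ^ 2) := by rw [hk, hb]; field_simp
  rw [hk', hμ]
  field_simp
  ring

end Parameters

/-- the trigonometric solution of the KS ODE in the case `b² = 144μν/47`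
satisfies the first-order subequation `(u' + (b/4ν) u_s)³ + (9/40ν) u_s⁴ = 0`
with `u_s = u - 5b³/(144ν²)`. -/
theorem ks_trig_case3_first_order_subequation
    (ν b μ A k ξ₀ : ℂ) (hν : ν ≠ 0) (hμ : μ ≠ 0)
    (hb : b ^ 2 = 144 * μ * ν / 47) (hk : k ^ 2 = μ / (47 * ν))
    (hA : A = -1800 * μ ^ 3 / (47 ^ 3 * ν))
    (τ u us : ℂ → ℂ)
    (hτ : ∀ ξ : ℂ, τ ξ = k / 2 * Complex.tanh (k * (ξ - ξ₀) / 2))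
    (hu : ∀ ξ : ℂ, u ξ =
      120 * ν * (τ ξ) ^ 3 - 15 * b * (τ ξ) ^ 2
        + (60 * μ / 19 - 30 * ν * k ^ 2 - 15 * b ^ 2 / (76 * ν)) * τ ξ
        + 5 / 2 * b * k ^ 2 - 13 * b ^ 3 / (608 * ν ^ 2) + 7 * μ * b / (76 * ν))
    (hus : ∀ ξ : ℂ, us ξ = u ξ - 5 * b ^ 3 / (144 * ν ^ 2)) :
    ∀ ξ : ℂ, Complex.cosh (k * (ξ - ξ₀) / 2) ≠ 0 →
      (deriv u ξ + b / (4 * ν) * us ξ) ^ 3 + 9 / (40 * ν) * (us ξ) ^ 4 = 0 := by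
  intro ξ hcosh
  set m := b / (24 * ν) with hm
  have hτ_fun : τ = fun x ↦ k / 2 * Complex.tanh (k / 2 * (x - ξ₀)) := by
    funext x; rw [hτ, div_mul_eq_mul_div k 2 (x - ξ₀)]
  have hus_cube : us = fun x ↦ 120 * ν * (τ x - m) ^ 3 := by
    funext x; rw [hus, hu, ks_trig_case3_sub_const_eq_cube hν hb hk]
  have hderiv_us : deriv us ξ = deriv u ξ := by rw [funext hus, deriv_sub_const]
  have hriccati : HasDerivAt τ (m ^ 2 - τ ξ ^ 2) ξ := by
    rw [sq_div_eq_sq_half_of_ks_trig_case3 hν hb hk, hτ_fun]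
    exact hasDerivAt_const_mul_tanh_riccati (by rwa [div_mul_eq_mul_div])
  have hbernoulli : HasDerivAt (fun x ↦ τ x - m)
      (-(2 * m) * (τ ξ - m) + -1 * (τ ξ - m) ^ 2) ξ :=
    (hriccati.sub_const m).congr_deriv (by ring)
  have hsub := first_order_subequation_of_bernoulli hbernoulli (120 * ν) 3
  rw [← hus_cube, ← congrFun hus_cube ξ, hderiv_us] at hsub
  have hcoeff : b / (4 * ν) = 6 * m := by rw [hm]; field_simp; ring
  rw [hcoeff]
  push_cast at hsub
  field_simp
  linear_combination hsub / 3
end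

section
/- Let ν, b, μ ∈ ℂ with ν ≠ 0 and μ ≠ 0, suppose b² = 256μν/73, let k, ξ₀ ∈ ℂ with k² = μ/(73ν), set A = −4050 μ³/(73³ ν), and let u(ξ) = 120ν τ(ξ)³ − 15b τ(ξ)² + (60μ/19 − 30νk² − 15b²/(76ν)) τ(ξ) + (5/2)b k² − 13b³/(608ν²) + 7μb/(76ν), where τ(ξ) = (k/2)·tanh(k(ξ−ξ₀)/2), on U = {ξ ∈ ℂ : cosh(k(ξ−ξ₀)/2) ≠ 0}. Put u_s = u − 45b³/(2048ν²). Then u satisfies the first-order equation (u' + (b/(8ν)) u_s)² · (u' + (b/(2ν)) u_s) + (9/(40ν)) · (u_s² + (5b³/(1024ν²)) u_s + (5b²/(128ν)) u')² = 0 identically on U. -/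
open Complex

/-!
Put `κ = b / (16ν)`. The parameter constraints say `μ = 73νκ²` and `k² = κ²`, and for these values
the cubic in `τ` degenerates: with `v = 2τ - κ` it has a double root at `v = 0`, namely
`u_s = 15ν v² (v - κ)`, while the Riccati equation `τ' = k² / 4 - τ²` becomes
`v' = -v (v + 2κ) / 2`. So `v ↦ (u_s, u')` is a polynomial parametrization of a curve, along which
the three factors of the subequation are products of powers of `v` and `v - 2κ`.
-/

section ParametrizedCurve

variable {K : Type*} [Field K]

/-- The value of `u_s` at the parameter `v = 2τ - κ`: the first coordinate of the polynomial
parametrization of the curve cut out by the first-order subequation. -/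
def cubicProfile (ν κ v : K) : K :=
  15 * ν * v ^ 2 * (v - κ)

/-- The value of `u'` at the parameter `v = 2τ - κ`: the second coordinate of the parametrization,
obtained from `cubicProfile` by the chain rule with `v' = -v (v + 2κ) / 2`. -/
def cubicProfileSlope (ν κ v : K) : K :=
  15 * ν * (3 * v ^ 2 - 2 * κ * v) * (-(v * (v + 2 * κ)) / 2)

variable [CharZero K] (ν κ v : K)

theorem cubicProfileSlope_add_two_mul_cubicProfile :
    cubicProfileSlope ν κ v + 2 * κ * cubicProfile ν κ v = -(45 / 2) * ν * v ^ 4 := by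
  unfold cubicProfileSlope cubicProfile
  ring

theorem cubicProfileSlope_add_eight_mul_cubicProfile :
    cubicProfileSlope ν κ v + 8 * κ * cubicProfile ν κ v
      = -(45 / 2) * ν * v ^ 2 * (v - 2 * κ) ^ 2 := by
  unfold cubicProfileSlope cubicProfile
  ring

theorem cubicProfile_sq_add_mul_add_mul_cubicProfileSlope :
    cubicProfile ν κ v ^ 2 + 20 * ν * κ ^ 3 * cubicProfile ν κ v
        + 10 * ν * κ ^ 2 * cubicProfileSlope ν κ v
      = 225 * ν ^ 2 * v ^ 5 * (v - 2 * κ) := by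
  unfold cubicProfileSlope cubicProfile
  ring

theorem cubicProfile_subequation :
    (cubicProfileSlope ν κ v + 2 * κ * cubicProfile ν κ v) ^ 2
        * (cubicProfileSlope ν κ v + 8 * κ * cubicProfile ν κ v)
      + 9 / (40 * ν) *
        (cubicProfile ν κ v ^ 2 + 20 * ν * κ ^ 3 * cubicProfile ν κ v
          + 10 * ν * κ ^ 2 * cubicProfileSlope ν κ v) ^ 2 = 0 := by
  rw [cubicProfileSlope_add_two_mul_cubicProfile, cubicProfileSlope_add_eight_mul_cubicProfile,
    cubicProfile_sq_add_mul_add_mul_cubicProfileSlope]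
  field_simp
  ring

end ParametrizedCurve

section Parameters

variable {K : Type*} [Field K] [CharZero K] {ν b μ k κ : K}

theorem exists_scale_of_parameter_relations (hν : ν ≠ 0)
    (hb : b ^ 2 = 256 * μ * ν / 73) (hk : k ^ 2 = μ / (73 * ν)) :
    ∃ κ, b = 16 * ν * κ ∧ μ = 73 * ν * κ ^ 2 ∧ k ^ 2 = κ ^ 2 := by
  have hκ : (b / (16 * ν)) ^ 2 = μ / (73 * ν) := by
    rw [div_pow, hb]
    field_simp
    ring
  refine ⟨b / (16 * ν), ?_, ?_, hk.trans hκ.symm⟩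
  · field_simp
  · rw [hκ]
    field_simp

theorem solution_sub_const_eq_cubicProfile (hk : k ^ 2 = κ ^ 2) (t : K) :
    120 * ν * t ^ 3 - 15 * (16 * ν * κ) * t ^ 2
        + (60 * (73 * ν * κ ^ 2) / 19 - 30 * ν * k ^ 2 - 15 * (16 * ν * κ) ^ 2 / (76 * ν)) * t
        + 5 / 2 * (16 * ν * κ) * k ^ 2 - 13 * (16 * ν * κ) ^ 3 / (608 * ν ^ 2)
        + 7 * (73 * ν * κ ^ 2) * (16 * ν * κ) / (76 * ν)
        - 45 * (16 * ν * κ) ^ 3 / (2048 * ν ^ 2)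
      = cubicProfile ν κ (2 * t - κ) := by
  rw [hk, cubicProfile]
  field_simp
  ring

end Parameters

section Riccati

variable {𝕜 : Type*} [NontriviallyNormedField 𝕜]

theorem hasDerivAt_two_mul_sub_of_riccati [CharZero 𝕜] {k κ : 𝕜} {τ : 𝕜 → 𝕜} {ξ : 𝕜}
    (hk : k ^ 2 = κ ^ 2) (hτ : HasDerivAt τ (k ^ 2 / 4 - τ ξ ^ 2) ξ) :
    HasDerivAt (fun x => 2 * τ x - κ) (-((2 * τ ξ - κ) * (2 * τ ξ - κ + 2 * κ)) / 2) ξ := by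
  refine ((hτ.const_mul 2).sub_const κ).congr_deriv ?_
  rw [hk]
  ring

theorem hasDerivAt_cubicProfile {κ : 𝕜} {v : 𝕜 → 𝕜} {ξ : 𝕜} (ν : 𝕜)
    (hv : HasDerivAt v (-(v ξ * (v ξ + 2 * κ)) / 2) ξ) :
    HasDerivAt (fun x => cubicProfile ν κ (v x)) (cubicProfileSlope ν κ (v ξ)) ξ := by
  refine (((hv.pow 2).const_mul (15 * ν)).mul (hv.sub_const κ)).congr_deriv ?_
  simp only [cubicProfileSlope, Pi.pow_apply, Nat.cast_ofNat]
  ring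

/-- The subequation holds along every solution of the Riccati equation `τ' = k² / 4 - τ²`,
for instance along `coth` and the constants `±k / 2` as well as along `tanh`. -/
theorem ks_trig_case4_first_order_subequation_general [CharZero 𝕜] {ν b μ k ξ : 𝕜}
    (hν : ν ≠ 0) (hb : b ^ 2 = 256 * μ * ν / 73) (hk : k ^ 2 = μ / (73 * ν))
    {τ u us : 𝕜 → 𝕜} (hτ : HasDerivAt τ (k ^ 2 / 4 - τ ξ ^ 2) ξ)
    (hu : ∀ x, u x =
      120 * ν * τ x ^ 3 - 15 * b * τ x ^ 2
        + (60 * μ / 19 - 30 * ν * k ^ 2 - 15 * b ^ 2 / (76 * ν)) * τ x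
        + 5 / 2 * b * k ^ 2 - 13 * b ^ 3 / (608 * ν ^ 2) + 7 * μ * b / (76 * ν))
    (hus : ∀ x, us x = u x - 45 * b ^ 3 / (2048 * ν ^ 2)) :
    (deriv u ξ + b / (8 * ν) * us ξ) ^ 2 * (deriv u ξ + b / (2 * ν) * us ξ)
      + 9 / (40 * ν) *
        (us ξ ^ 2 + 5 * b ^ 3 / (1024 * ν ^ 2) * us ξ
          + 5 * b ^ 2 / (128 * ν) * deriv u ξ) ^ 2 = 0 := by
  obtain ⟨κ, rfl, rfl, hkκ⟩ := exists_scale_of_parameter_relations hν hb hk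
  have us_eq : us = fun x => cubicProfile ν κ (2 * τ x - κ) := by
    funext x
    rw [hus, hu, solution_sub_const_eq_cubicProfile hkκ]
  have deriv_u : deriv u ξ = cubicProfileSlope ν κ (2 * τ ξ - κ) := calc
    deriv u ξ = deriv us ξ := by rw [funext hus, deriv_sub_const]
    _ = cubicProfileSlope ν κ (2 * τ ξ - κ) := by
      rw [us_eq]
      exact (hasDerivAt_cubicProfile ν (hasDerivAt_two_mul_sub_of_riccati hkκ hτ)).deriv
  have coeff_two : 16 * ν * κ / (8 * ν) = 2 * κ := by field_simp; ring
  have coeff_eight : 16 * ν * κ / (2 * ν) = 8 * κ := by field_simp; ring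
  have coeff_us : 5 * (16 * ν * κ) ^ 3 / (1024 * ν ^ 2) = 20 * ν * κ ^ 3 := by field_simp; ring
  have coeff_deriv : 5 * (16 * ν * κ) ^ 2 / (128 * ν) = 10 * ν * κ ^ 2 := by field_simp; ring
  rw [deriv_u, us_eq, coeff_two, coeff_eight, coeff_us, coeff_deriv]
  exact cubicProfile_subequation ν κ _

end Riccati

theorem hasDerivAt_half_mul_tanh {k ξ₀ ξ : ℂ} (hcosh : cosh (k * (ξ - ξ₀) / 2) ≠ 0) :
    HasDerivAt (fun x => k / 2 * tanh (k * (x - ξ₀) / 2))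
      (k ^ 2 / 4 - (k / 2 * tanh (k * (ξ - ξ₀) / 2)) ^ 2) ξ := by
  have phase : HasDerivAt (fun x => k * (x - ξ₀) / 2) (k / 2) ξ := by
    simpa only [id, mul_one] using (((hasDerivAt_id ξ).sub_const ξ₀).const_mul k).div_const 2
  simp only [tanh_eq_sinh_div_cosh]
  refine ((phase.csinh.fun_div phase.ccosh hcosh).const_mul (k / 2)).congr_deriv ?_
  field_simp
  ring

/-- the trigonometric solution of the KS ODE in the case `b² = 256μν/73`
satisfies the first-order subequation
`(u' + (b/8ν) u_s)² (u' + (b/2ν) u_s) + (9/40ν)(u_s² + (5b³/1024ν²) u_s + (5b²/128ν) u')² = 0`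
with `u_s = u - 45b³/(2048ν²)`. -/
theorem ks_trig_case4_first_order_subequation
    (ν b μ A k ξ₀ : ℂ) (hν : ν ≠ 0) (hμ : μ ≠ 0)
    (hb : b ^ 2 = 256 * μ * ν / 73) (hk : k ^ 2 = μ / (73 * ν))
    (hA : A = -4050 * μ ^ 3 / (73 ^ 3 * ν))
    (τ u us : ℂ → ℂ)
    (hτ : ∀ ξ : ℂ, τ ξ = k / 2 * Complex.tanh (k * (ξ - ξ₀) / 2))
    (hu : ∀ ξ : ℂ, u ξ =
      120 * ν * (τ ξ) ^ 3 - 15 * b * (τ ξ) ^ 2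
        + (60 * μ / 19 - 30 * ν * k ^ 2 - 15 * b ^ 2 / (76 * ν)) * τ ξ
        + 5 / 2 * b * k ^ 2 - 13 * b ^ 3 / (608 * ν ^ 2) + 7 * μ * b / (76 * ν))
    (hus : ∀ ξ : ℂ, us ξ = u ξ - 45 * b ^ 3 / (2048 * ν ^ 2)) :
    ∀ ξ : ℂ, Complex.cosh (k * (ξ - ξ₀) / 2) ≠ 0 →
      (deriv u ξ + b / (8 * ν) * us ξ) ^ 2 * (deriv u ξ + b / (2 * ν) * us ξ)
        + 9 / (40 * ν) *
          ((us ξ) ^ 2 + 5 * b ^ 3 / (1024 * ν ^ 2) * us ξ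
            + 5 * b ^ 2 / (128 * ν) * deriv u ξ) ^ 2 = 0 := by
  intro ξ hcosh
  obtain rfl := funext hτ
  exact ks_trig_case4_first_order_subequation_general hν hb hk (hasDerivAt_half_mul_tanh hcosh)
    hu hus
end
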